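/- arXiv:1910.01901 — 2 statements merged into one kernel-verified Lean document; each statement's English description precedes it below -/
import Mathlib

section
/- Let F_S, F_R, F_C, F_N be finite-dimensional real vector spaces with duals E_S, E_R, E_C, E_N. Let J : E_S → F_S be linear and skew-symmetric (e₁(J e₂) = -e₂(J e₁) for all e₁, e₂ ∈ E_S), and for α ∈ {R, C, N} let G_α : F_α → F_S be linear with dual map G_α* : E_S → E_α characterized by (G_α* e)(f) = e(G_α f). Then the subspace D := {(f_S, f_R, f_C, f_N, e_S, e_R, e_C, e_N) : f_S = -J e_S - G_R f_R - G_C f_C - G_N f_N, e_R = G_R* e_S, e_C = G_C* e_S, e_N = G_N* e_S} satisfies D = D⊥ with respect to the pairing ⟨⟨(f,e),(f̄,ē)⟩⟩ := e_S(f̄_S) + ē_S(f_S) + e_R(f̄_R) + ē_R(f_R) + e_C(f̄_C) + ē_C(f_C) + e_N(f̄_N) + ē_N(f_N); that is, D is a Dirac structure (kernel representation of the port-Hamiltonian Dirac structure with storage, resistive, control and noise ports). -/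
variable (FS FR FC FN : Type*)
  [AddCommGroup FS] [Module ℝ FS] [FiniteDimensional ℝ FS]
  [AddCommGroup FR] [Module ℝ FR] [FiniteDimensional ℝ FR]
  [AddCommGroup FC] [Module ℝ FC] [FiniteDimensional ℝ FC]
  [AddCommGroup FN] [Module ℝ FN] [FiniteDimensional ℝ FN]

/-- The total space of port variables `(f_S, f_R, f_C, f_N, e_S, e_R, e_C, e_N)`. -/
abbrev PortSpace :=
  FS × FR × FC × FN ×
    Module.Dual ℝ FS × Module.Dual ℝ FR × Module.Dual ℝ FC × Module.Dual ℝ FN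

/-- Kernel representation of the port-Hamiltonian Dirac structure with
storage, resistive, control and noise ports. -/
def diracKernel (J : Module.Dual ℝ FS →ₗ[ℝ] FS)
    (GR : FR →ₗ[ℝ] FS) (GC : FC →ₗ[ℝ] FS) (GN : FN →ₗ[ℝ] FS)
    (GRs : Module.Dual ℝ FS →ₗ[ℝ] Module.Dual ℝ FR)
    (GCs : Module.Dual ℝ FS →ₗ[ℝ] Module.Dual ℝ FC)
    (GNs : Module.Dual ℝ FS →ₗ[ℝ] Module.Dual ℝ FN) :
    Set (PortSpace FS FR FC FN) :=
  {p | p.1 = -J p.2.2.2.2.1 - GR p.2.1 - GC p.2.2.1 - GN p.2.2.2.1 ∧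
       p.2.2.2.2.2.1 = GRs p.2.2.2.2.1 ∧
       p.2.2.2.2.2.2.1 = GCs p.2.2.2.2.1 ∧
       p.2.2.2.2.2.2.2 = GNs p.2.2.2.2.1}

/-- The symmetric bilinear pairing obtained by summing the duality pairings
over the four ports. -/
def portPairing (p q : PortSpace FS FR FC FN) : ℝ :=
  p.2.2.2.2.1 q.1 + q.2.2.2.2.1 p.1 +
  p.2.2.2.2.2.1 q.2.1 + q.2.2.2.2.2.1 p.2.1 +
  p.2.2.2.2.2.2.1 q.2.2.1 + q.2.2.2.2.2.2.1 p.2.2.1 +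
  p.2.2.2.2.2.2.2 q.2.2.2.1 + q.2.2.2.2.2.2.2 p.2.2.2.1

/-! The effort of the storage port and the flows of the other ports determine the remaining port
variables through a linear map, and skew-symmetry of `J` makes this map skew-symmetric for the
summed duality pairing. The graph of a skew map `K` is its own orthogonal complement: `(x, y)` is
orthogonal to `(x', K x')` exactly when `x'` annihilates `y - K x`. -/

section SkewGraph

variable {R X Y P Q : Type*} [CommRing R]
  [AddCommGroup X] [Module R X] [AddCommGroup Y] [Module R Y]
  [AddCommGroup P] [Module R P] [AddCommGroup Q] [Module R Q]

/-- The symmetric form `⟨(x, y), (x', y')⟩ = B x y' + B x' y` on `X × Y` attached to a pairing `B`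
of `X` with `Y`. For the evaluation pairing of `Module.Dual R Y` with `Y` this is Mathlib's
`LinearMap.dualProd`; a general `X` lets flows and efforts share the first factor. -/
def hyperbolicForm (B : X →ₗ[R] Y →ₗ[R] R) : LinearMap.BilinForm R (X × Y) :=
  B.compl₁₂ (.fst R X Y) (.snd R X Y) + (B.compl₁₂ (.fst R X Y) (.snd R X Y)).flip

@[simp]
theorem hyperbolicForm_apply (B : X →ₗ[R] Y →ₗ[R] R) (z w : X × Y) :
    hyperbolicForm B z w = B z.1 w.2 + B w.1 z.2 :=
  rfl

/-- Skew-symmetry, with respect to a pairing of `X` with `Y`, of a map from `X` to `Y`; Mathlib's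
`LinearMap.IsSkewAdjoint` covers endomorphisms only. -/
def IsSkewMap (B : X →ₗ[R] Y →ₗ[R] R) (K : X →ₗ[R] Y) : Prop :=
  ∀ x x', B x (K x') = -B x' (K x)

theorem IsSkewMap.graph_eq_orthogonal {B : X →ₗ[R] Y →ₗ[R] R} {K : X →ₗ[R] Y}
    (hK : IsSkewMap B K) (hB : B.SeparatingRight) :
    K.graph = (hyperbolicForm B).orthogonal K.graph := by
  ext ⟨x, y⟩
  have pairing_graph (x' : X) : hyperbolicForm B (x', K x') (x, y) = B x' (y - K x) := by
    rw [hyperbolicForm_apply, hK x x', map_sub, sub_eq_add_neg]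
  calc (x, y) ∈ K.graph
    _ ↔ y - K x = 0 := by rw [LinearMap.mem_graph_iff, sub_eq_zero]
    _ ↔ ∀ x', B x' (y - K x) = 0 := ⟨fun h x' ↦ by rw [h, map_zero], hB _⟩
    _ ↔ ∀ x', hyperbolicForm B (x', K x') (x, y) = 0 := by simp only [pairing_graph]
    _ ↔ (x, y) ∈ (hyperbolicForm B).orthogonal K.graph := by
      simp only [LinearMap.BilinForm.mem_orthogonal_iff, LinearMap.mem_graph_iff, Prod.forall,
        forall_eq]

/-- The pairing of `X × P` with `Y × Q` obtained by summing a pairing of `X` with `Y` and a pairing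
of `P` with `Q`. -/
def prodPairing (B : X →ₗ[R] Y →ₗ[R] R) (C : P →ₗ[R] Q →ₗ[R] R) :
    X × P →ₗ[R] Y × Q →ₗ[R] R :=
  B.compl₁₂ (.fst R X P) (.fst R Y Q) + C.compl₁₂ (.snd R X P) (.snd R Y Q)

@[simp]
theorem prodPairing_apply (B : X →ₗ[R] Y →ₗ[R] R) (C : P →ₗ[R] Q →ₗ[R] R)
    (z : X × P) (w : Y × Q) : prodPairing B C z w = B z.1 w.1 + C z.2 w.2 :=
  rfl

theorem separatingRight_prodPairing {B : X →ₗ[R] Y →ₗ[R] R} {C : P →ₗ[R] Q →ₗ[R] R}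
    (hB : B.SeparatingRight) (hC : C.SeparatingRight) : (prodPairing B C).SeparatingRight :=
  fun w hw ↦ Prod.ext (hB w.1 fun x ↦ by simpa using hw (x, 0))
    (hC w.2 fun p ↦ by simpa using hw (0, p))

/-- The input-output map `(x, p) ↦ (-(J x + G p), G' x)` of a system with structure map `J` and an
external port entering through `G` and read off through `G'`. The first sign is that of the kernel
representation. -/
def portMap (J : X →ₗ[R] Y) (G : P →ₗ[R] Y) (G' : X →ₗ[R] Q) : X × P →ₗ[R] Y × Q :=
  (-J.coprod G).prod (G' ∘ₗ .fst R X P)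

@[simp]
theorem portMap_apply (J : X →ₗ[R] Y) (G : P →ₗ[R] Y) (G' : X →ₗ[R] Q) (z : X × P) :
    portMap J G G' z = (-(J z.1 + G z.2), G' z.1) :=
  rfl

theorem IsSkewMap.portMap {B : X →ₗ[R] Y →ₗ[R] R} {C : P →ₗ[R] Q →ₗ[R] R}
    {J : X →ₗ[R] Y} {G : P →ₗ[R] Y} {G' : X →ₗ[R] Q} (hJ : IsSkewMap B J)
    (hG : ∀ x p, C p (G' x) = B x (G p)) :
    IsSkewMap (prodPairing B C) (portMap J G G') := fun ⟨x, p⟩ ⟨x', p'⟩ ↦ by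
  simp only [prodPairing_apply, portMap_apply, map_neg, map_add, hG, hJ x x']
  ring

end SkewGraph

section FourPorts

variable {R VS VR VC VN : Type*} [CommRing R]
  [AddCommGroup VS] [Module R VS] [AddCommGroup VR] [Module R VR]
  [AddCommGroup VC] [Module R VC] [AddCommGroup VN] [Module R VN]

open Module (Dual)

variable (R VS VR VC VN) in
/-- `PortSpace` for modules over an arbitrary commutative ring, with the same order of factors. -/
abbrev PortModule :=
  VS × VR × VC × VN × Dual R VS × Dual R VR × Dual R VC × Dual R VN

/-- `diracKernel` for modules over an arbitrary commutative ring. -/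
def moduleDiracKernel (J : Dual R VS →ₗ[R] VS)
    (GR : VR →ₗ[R] VS) (GC : VC →ₗ[R] VS) (GN : VN →ₗ[R] VS)
    (GRs : Dual R VS →ₗ[R] Dual R VR) (GCs : Dual R VS →ₗ[R] Dual R VC)
    (GNs : Dual R VS →ₗ[R] Dual R VN) : Set (PortModule R VS VR VC VN) :=
  {(fS, fR, fC, fN, eS, eR, eC, eN) : PortModule R VS VR VC VN |
    fS = -J eS - GR fR - GC fC - GN fN ∧ eR = GRs eS ∧ eC = GCs eS ∧ eN = GNs eS}

/-- `portPairing` for modules over an arbitrary commutative ring. -/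
def modulePortPairing : PortModule R VS VR VC VN → PortModule R VS VR VC VN → R
  | (fS, fR, fC, fN, eS, eR, eC, eN), (fS', fR', fC', fN', eS', eR', eC', eN') =>
    eS fS' + eS' fS + eR fR' + eR' fR + eC fC' + eC' fC + eN fN' + eN' fN

variable (R VS VR VC VN) in
/-- The regrouping of the port variables into inputs `(e_S, f_R, f_C, f_N)` and outputs
`(f_S, e_R, e_C, e_N)`, which exhibits the kernel representation as a graph. -/
def inputOutputEquiv : PortModule R VS VR VC VN ≃
    (Dual R VS × VR × VC × VN) × (VS × Dual R VR × Dual R VC × Dual R VN) where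
  toFun | (fS, fR, fC, fN, eS, eR, eC, eN) => ((eS, fR, fC, fN), (fS, eR, eC, eN))
  invFun | ((eS, fR, fC, fN), (fS, eR, eC, eN)) => (fS, fR, fC, fN, eS, eR, eC, eN)

variable (R VR VC VN) in
/-- The pairing of the flows with the efforts of the three external ports. -/
def externalPairing : (VR × VC × VN) →ₗ[R] (Dual R VR × Dual R VC × Dual R VN) →ₗ[R] R :=
  prodPairing (Dual.eval R VR) (prodPairing (Dual.eval R VC) (Dual.eval R VN))

variable (R VS VR VC VN) in
/-- The pairing of the inputs `(e_S, f_R, f_C, f_N)` with the outputs `(f_S, e_R, e_C, e_N)`. The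
identity of `E_S`, read as a bilinear map on `E_S × F_S`, is the storage port's pairing. -/
def inputOutputPairing : (Dual R VS × VR × VC × VN) →ₗ[R]
    (VS × Dual R VR × Dual R VC × Dual R VN) →ₗ[R] R :=
  prodPairing .id (externalPairing R VR VC VN)

theorem separatingRight_eval (R V : Type*) [CommRing R] [AddCommGroup V] [Module R V] :
    (Dual.eval R V).SeparatingRight :=
  fun _ h ↦ LinearMap.ext h

theorem separatingRight_inputOutputPairing (hVS : Function.Injective (Dual.eval R VS)) :
    (inputOutputPairing R VS VR VC VN).SeparatingRight :=
  have separatingRight_id : (.id : Dual R VS →ₗ[R] VS →ₗ[R] R).SeparatingRight :=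
    LinearMap.separatingRight_iff_flip_ker_eq_bot.mpr (LinearMap.ker_eq_bot.mpr hVS)
  separatingRight_prodPairing separatingRight_id <|
    separatingRight_prodPairing (separatingRight_eval R VR) <|
      separatingRight_prodPairing (separatingRight_eval R VC) (separatingRight_eval R VN)

theorem modulePortPairing_eq_hyperbolicForm (p q : PortModule R VS VR VC VN) :
    modulePortPairing p q = hyperbolicForm (inputOutputPairing R VS VR VC VN)
      (inputOutputEquiv R VS VR VC VN q) (inputOutputEquiv R VS VR VC VN p) := by
  simp only [modulePortPairing, inputOutputEquiv, inputOutputPairing, externalPairing,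
    Equiv.coe_fn_mk, hyperbolicForm_apply, prodPairing_apply, LinearMap.id_apply, Dual.eval_apply]
  ring

theorem mem_moduleDiracKernel_iff_mem_graph {J : Dual R VS →ₗ[R] VS}
    {GR : VR →ₗ[R] VS} {GC : VC →ₗ[R] VS} {GN : VN →ₗ[R] VS}
    {GRs : Dual R VS →ₗ[R] Dual R VR} {GCs : Dual R VS →ₗ[R] Dual R VC}
    {GNs : Dual R VS →ₗ[R] Dual R VN} (p : PortModule R VS VR VC VN) :
    p ∈ moduleDiracKernel J GR GC GN GRs GCs GNs ↔
      inputOutputEquiv R VS VR VC VN p ∈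
        (portMap J (GR.coprod (GC.coprod GN)) (GRs.prod (GCs.prod GNs))).graph := by
  simp only [moduleDiracKernel, inputOutputEquiv, Equiv.coe_fn_mk, Set.mem_ofPred_eq,
    LinearMap.mem_graph_iff, portMap_apply, LinearMap.coprod_apply, LinearMap.prod_apply,
    Function.prod_apply, Prod.mk.injEq, neg_add', sub_sub, add_assoc]

theorem isSkewMap_portMap_coprod_prod {J : Dual R VS →ₗ[R] VS}
    {GR : VR →ₗ[R] VS} {GC : VC →ₗ[R] VS} {GN : VN →ₗ[R] VS}
    {GRs : Dual R VS →ₗ[R] Dual R VR} {GCs : Dual R VS →ₗ[R] Dual R VC}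
    {GNs : Dual R VS →ₗ[R] Dual R VN}
    (hJ : ∀ e₁ e₂ : Dual R VS, e₁ (J e₂) = -e₂ (J e₁))
    (hGRs : ∀ e f, GRs e f = e (GR f)) (hGCs : ∀ e f, GCs e f = e (GC f))
    (hGNs : ∀ e f, GNs e f = e (GN f)) :
    IsSkewMap (inputOutputPairing R VS VR VC VN)
      (portMap J (GR.coprod (GC.coprod GN)) (GRs.prod (GCs.prod GNs))) :=
  IsSkewMap.portMap hJ fun e f ↦ by simp [externalPairing, hGRs, hGCs, hGNs]

theorem kernel_representation_four_ports_is_dirac_general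
    (hVS : Function.Injective (Dual.eval R VS))
    (J : Dual R VS →ₗ[R] VS) (hJ : ∀ e₁ e₂ : Dual R VS, e₁ (J e₂) = -e₂ (J e₁))
    (GR : VR →ₗ[R] VS) (GC : VC →ₗ[R] VS) (GN : VN →ₗ[R] VS)
    (GRs : Dual R VS →ₗ[R] Dual R VR) (GCs : Dual R VS →ₗ[R] Dual R VC)
    (GNs : Dual R VS →ₗ[R] Dual R VN)
    (hGRs : ∀ e f, GRs e f = e (GR f)) (hGCs : ∀ e f, GCs e f = e (GC f))
    (hGNs : ∀ e f, GNs e f = e (GN f)) :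
    moduleDiracKernel J GR GC GN GRs GCs GNs =
      {p | ∀ q ∈ moduleDiracKernel J GR GC GN GRs GCs GNs, modulePortPairing p q = 0} := by
  have graph_eq_orthogonal := (isSkewMap_portMap_coprod_prod hJ hGRs hGCs hGNs).graph_eq_orthogonal
    (separatingRight_inputOutputPairing hVS)
  ext p
  rw [mem_moduleDiracKernel_iff_mem_graph, graph_eq_orthogonal,
    LinearMap.BilinForm.mem_orthogonal_iff, Set.mem_ofPred_eq,
    ← (inputOutputEquiv R VS VR VC VN).forall_congr_right]
  simp only [mem_moduleDiracKernel_iff_mem_graph, modulePortPairing_eq_hyperbolicForm]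

end FourPorts

/-- The kernel representation with storage, resistive, control and noise ports
is a Dirac structure: it equals its orthogonal complement with respect to the
summed duality pairing. -/
theorem kernel_representation_four_ports_is_dirac
    (J : Module.Dual ℝ FS →ₗ[ℝ] FS)
    (hJ : ∀ e₁ e₂ : Module.Dual ℝ FS, e₁ (J e₂) = - e₂ (J e₁))
    (GR : FR →ₗ[ℝ] FS) (GC : FC →ₗ[ℝ] FS) (GN : FN →ₗ[ℝ] FS)
    (GRs : Module.Dual ℝ FS →ₗ[ℝ] Module.Dual ℝ FR)
    (GCs : Module.Dual ℝ FS →ₗ[ℝ] Module.Dual ℝ FC)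
    (GNs : Module.Dual ℝ FS →ₗ[ℝ] Module.Dual ℝ FN)
    (hGRs : ∀ (e : Module.Dual ℝ FS) (f : FR), GRs e f = e (GR f))
    (hGCs : ∀ (e : Module.Dual ℝ FS) (f : FC), GCs e f = e (GC f))
    (hGNs : ∀ (e : Module.Dual ℝ FS) (f : FN), GNs e f = e (GN f)) :
    diracKernel FS FR FC FN J GR GC GN GRs GCs GNs =
      {p : PortSpace FS FR FC FN |
        ∀ q ∈ diracKernel FS FR FC FN J GR GC GN GRs GCs GNs,
          portPairing FS FR FC FN p q = 0} :=
  kernel_representation_four_ports_is_dirac_general (Module.eval_apply_injective ℝ)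
    J hJ GR GC GN GRs GCs GNs hGRs hGCs hGNs
end

section
/- Let V_A, V_B and F be finite-dimensional real vector spaces with duals V_A*, V_B*, F*. Let D_A ⊆ V_A × V_A* × F × F* be a Dirac structure (D_A = D_A⊥ with respect to the pairing ⟨⟨(v,α,f,e),(v̄,ᾱ,f̄,ē)⟩⟩ := α(v̄) + ᾱ(v) + e(f̄) + ē(f)) and let D_B ⊆ V_B × V_B* × F × F* be a Dirac structure for the analogous pairing. Define the composition D_A ∘ D_B := {(v_A, α_A, v_B, α_B) ∈ V_A × V_A* × V_B × V_B* : there exist f ∈ F and e ∈ F* with (v_A, α_A, -f, e) ∈ D_A and (v_B, α_B, f, e) ∈ D_B}. Then D_A ∘ D_B is a Dirac structure on V_A × V_B, i.e. D_A ∘ D_B = (D_A ∘ D_B)⊥ with respect to the pairing ⟨⟨(v_A,α_A,v_B,α_B),(v̄_A,ᾱ_A,v̄_B,ᾱ_B)⟩⟩ := α_A(v̄_A) + ᾱ_A(v_A) + α_B(v̄_B) + ᾱ_B(v_B). -/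
/-!
That the composition is isotropic is immediate: the two port contributions to the pairing cancel.
For the converse, let `(a, b)` be orthogonal to the composition. The functional
`((x, q), (y, r)) ↦ ⟪a, x⟫ + ⟪b, y⟫` on `D_A × D_B` vanishes wherever the port variables `q` and `r`
match, so it is a functional `ψ` of the mismatch of the port variables, a Lagrange multiplier for
the interconnection constraint. As `F` is finite-dimensional, the port pairing represents `ψ` by a
port variable, and self-orthogonality of `D_A` and `D_B` says that this port variable, up to sign,
witnesses that `(a, b)` lies in the composition.
-/

variable (VA VB F : Type*)
  [AddCommGroup VA] [Module ℝ VA] [FiniteDimensional ℝ VA]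
  [AddCommGroup VB] [Module ℝ VB] [FiniteDimensional ℝ VB]
  [AddCommGroup F] [Module ℝ F] [FiniteDimensional ℝ F]

/-- Pairing on `V × V* × F × F*` obtained summing the duality pairings. -/
def pairingWithPort (p q : VA × Module.Dual ℝ VA × F × Module.Dual ℝ F) : ℝ :=
  p.2.1 q.1 + q.2.1 p.1 + p.2.2.2 q.2.2.1 + q.2.2.2 p.2.2.1

/-- Pairing on `V_A × V_A* × V_B × V_B*` obtained summing the duality pairings. -/
def pairingAB (p q : VA × Module.Dual ℝ VA × VB × Module.Dual ℝ VB) : ℝ :=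
  p.2.1 q.1 + q.2.1 p.1 + p.2.2.2 q.2.2.1 + q.2.2.2 p.2.2.1

open Module (Dual)
open LinearMap (BilinForm)

section SelfOrthogonal

variable {R E E' : Type*} [CommSemiring R] [AddCommMonoid E] [Module R E]
  [AddCommMonoid E'] [Module R E']

/-- The equality `D = D⊥` for a subset `D` of a module with a bilinear form. For the pairing of a
product of flow-effort spaces this says that `D` is a Dirac structure. It is stated for
sets; `IsSelfOrthogonal.toSubmodule` is the corresponding subspace. -/
def IsSelfOrthogonal (B : BilinForm R E) (D : Set E) : Prop :=
  D = {x | ∀ y ∈ D, B x y = 0}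

theorem IsSelfOrthogonal.mem_iff {B : BilinForm R E} {D : Set E} (hD : IsSelfOrthogonal B D)
    {x : E} : x ∈ D ↔ ∀ y ∈ D, B x y = 0 :=
  Set.ext_iff.mp hD x

/-- A self-orthogonal set as a submodule, whose carrier is definitionally `D`. -/
def IsSelfOrthogonal.toSubmodule {B : BilinForm R E} {D : Set E} (hD : IsSelfOrthogonal B D) :
    Submodule R E :=
  (⨅ y ∈ D, LinearMap.ker (B.flip y)).copy D (by ext x; simpa using hD.mem_iff)

theorem isSelfOrthogonal_congr_iff {B : BilinForm R E} (e : E ≃ₗ[R] E') {D : Set E'} :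
    IsSelfOrthogonal (BilinForm.congr e B) D ↔ IsSelfOrthogonal B (e ⁻¹' D) := by
  simp [IsSelfOrthogonal, Set.ext_iff, e.surjective.forall]

/-- The orthogonal direct sum of two bilinear forms, by which the pairing of a product of
flow-effort spaces is built from the pairings of its factors. -/
def orthogonalSum (B : BilinForm R E) (B' : BilinForm R E') : BilinForm R (E × E') :=
  B.compl₁₂ (.fst R E E') (.fst R E E') + B'.compl₁₂ (.snd R E E') (.snd R E E')

@[simp]
theorem orthogonalSum_apply (B : BilinForm R E) (B' : BilinForm R E') (x y : E × E') :
    orthogonalSum B B' x y = B x.1 y.1 + B' x.2 y.2 :=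
  rfl

end SelfOrthogonal

section Interconnection

/-- The composition of two relations through ports `P` and `Q`, with the port variables matched
by `σ` and then eliminated. -/
def interconnection {E₁ E₂ P Q : Type*} (σ : Q → P) (D₁ : Set (E₁ × P)) (D₂ : Set (E₂ × Q)) :
    Set (E₁ × E₂) :=
  {r | ∃ q, (r.1, σ q) ∈ D₁ ∧ (r.2, q) ∈ D₂}

variable {K E₁ E₂ P Q : Type*} [Field K] [AddCommGroup E₁] [Module K E₁]
  [AddCommGroup E₂] [Module K E₂] [AddCommGroup P] [Module K P] [AddCommGroup Q] [Module K Q]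

theorem exists_dual_of_forall_matched (σ : Q →ₗ[K] P)
    (S₁ : Submodule K (E₁ × P)) (S₂ : Submodule K (E₂ × Q))
    (φ₁ : Dual K E₁) (φ₂ : Dual K E₂)
    (h : ∀ x y q, (x, σ q) ∈ S₁ → (y, q) ∈ S₂ → φ₁ x + φ₂ y = 0) :
    ∃ ψ : Dual K P,
      (∀ z ∈ S₁, φ₁ z.1 = ψ z.2) ∧ ∀ z ∈ S₂, φ₂ z.1 = -ψ (σ z.2) := by
  let mismatch : S₁ × S₂ →ₗ[K] P :=
    (.snd K E₁ P ∘ₗ S₁.subtype).coprod (-(σ ∘ₗ .snd K E₂ Q ∘ₗ S₂.subtype))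
  let φ : Dual K (S₁ × S₂) :=
    (φ₁ ∘ₗ .fst K E₁ P ∘ₗ S₁.subtype).coprod (φ₂ ∘ₗ .fst K E₂ Q ∘ₗ S₂.subtype)
  have hφ : φ ∈ LinearMap.range mismatch.dualMap := by
    rw [LinearMap.range_dualMap_eq_dualAnnihilator_ker, Submodule.mem_dualAnnihilator]
    rintro ⟨⟨⟨x, p⟩, hx⟩, ⟨⟨y, q⟩, hy⟩⟩ hker
    obtain rfl : p = σ q := by simpa [mismatch, ← sub_eq_add_neg, sub_eq_zero] using hker
    exact h x y q hx hy
  obtain ⟨ψ, hψ⟩ := hφ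
  refine ⟨ψ, fun z hz ↦ ?_, fun z hz ↦ ?_⟩
  · simpa [mismatch, φ] using (LinearMap.congr_fun hψ (⟨z, hz⟩, 0)).symm
  · simpa [mismatch, φ] using (LinearMap.congr_fun hψ (0, ⟨z, hz⟩)).symm

theorem IsSelfOrthogonal.interconnection
    {B₁ : BilinForm K E₁} {B₂ : BilinForm K E₂} {BP : BilinForm K P} {BQ : BilinForm K Q}
    {D₁ : Set (E₁ × P)} {D₂ : Set (E₂ × Q)}
    (hD₁ : IsSelfOrthogonal (orthogonalSum B₁ BP) D₁)
    (hD₂ : IsSelfOrthogonal (orthogonalSum B₂ BQ) D₂) (hBP : Function.Surjective BP)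
    {σ : Q →ₗ[K] P} (hσ : Function.Surjective σ) (hσB : ∀ q r, BP (σ q) (σ r) = -BQ q r) :
    IsSelfOrthogonal (orthogonalSum B₁ B₂) (interconnection σ D₁ D₂) := by
  ext ⟨a, b⟩
  constructor
  · rintro ⟨q, ha, hb⟩ ⟨x, y⟩ ⟨r, hx, hy⟩
    have h₁ : B₁ a x + BP (σ q) (σ r) = 0 := hD₁.mem_iff.mp ha _ hx
    have h₂ : B₂ b y + BQ q r = 0 := hD₂.mem_iff.mp hb _ hy
    rw [orthogonalSum_apply]
    linear_combination h₁ + h₂ - hσB q r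
  · intro hab
    obtain ⟨ψ, hψ₁, hψ₂⟩ := exists_dual_of_forall_matched σ hD₁.toSubmodule hD₂.toSubmodule
      (B₁ a) (B₂ b) fun x y q hx hy ↦ hab (x, y) ⟨q, hx, hy⟩
    obtain ⟨p, rfl⟩ := hBP ψ
    obtain ⟨q, hq⟩ := hσ (-p)
    refine ⟨q, hD₁.mem_iff.mpr fun z hz ↦ ?_, hD₂.mem_iff.mpr fun z hz ↦ ?_⟩
    · simp [hq, hψ₁ z hz]
    · have hport : BP p (σ z.2) = BQ q z.2 := by
        simpa [hq] using hσB q z.2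
      simp [hψ₂ z hz, hport]

end Interconnection

section FlowEffort

variable (R V W : Type*) [CommSemiring R] [AddCommMonoid V] [Module R V]
  [AddCommMonoid W] [Module R W]

/-- The symmetric pairing of the flow-effort space `V × V*`. It is `LinearMap.dualProd` with the
flow written before the effort. -/
def flowEffortPairing : BilinForm R (V × Dual R V) :=
  BilinForm.congr (LinearEquiv.prodComm R (Dual R V) V) (LinearMap.dualProd R V)

variable {R V} in
theorem flowEffortPairing_apply (x y : V × Dual R V) :
    flowEffortPairing R V x y = x.2 y.1 + y.2 x.1 :=
  add_comm _ _

theorem flowEffortPairing_surjective [Module.IsReflexive R V] :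
    Function.Surjective (flowEffortPairing R V) := by
  intro ψ
  refine ⟨((Module.evalEquiv R V).symm (ψ ∘ₗ .inr R V (Dual R V)), ψ ∘ₗ .inl R V (Dual R V)), ?_⟩
  ext <;> simp [flowEffortPairing_apply, Prod.mk_zero_zero]

/-- The pairing of the two-port flow-effort space `V × V* × W × W*`, the product being associated
to the right. -/
def twoPortPairing : BilinForm R (V × Dual R V × W × Dual R W) :=
  BilinForm.congr (LinearEquiv.prodAssoc R V (Dual R V) (W × Dual R W))
    (orthogonalSum (flowEffortPairing R V) (flowEffortPairing R W))

variable {R V W} in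
theorem twoPortPairing_apply (p q : V × Dual R V × W × Dual R W) :
    twoPortPairing R V W p q = p.2.1 q.1 + q.2.1 p.1 + p.2.2.2 q.2.2.1 + q.2.2.2 p.2.2.1 := by
  change flowEffortPairing R V (p.1, p.2.1) (q.1, q.2.1) +
    flowEffortPairing R W p.2.2 q.2.2 = _
  simp [flowEffortPairing_apply, add_assoc]

end FlowEffort

theorem composition_of_dirac_structures_is_dirac_general {K V₁ V₂ W : Type*} [Field K]
    [AddCommGroup V₁] [Module K V₁] [AddCommGroup V₂] [Module K V₂]
    [AddCommGroup W] [Module K W] [FiniteDimensional K W]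
    {D₁ : Set (V₁ × Dual K V₁ × W × Dual K W)} {D₂ : Set (V₂ × Dual K V₂ × W × Dual K W)}
    (hD₁ : IsSelfOrthogonal (twoPortPairing K V₁ W) D₁)
    (hD₂ : IsSelfOrthogonal (twoPortPairing K V₂ W) D₂) :
    IsSelfOrthogonal (twoPortPairing K V₁ V₂)
      {r | ∃ (f : W) (e : Dual K W),
        (r.1, r.2.1, -f, e) ∈ D₁ ∧ (r.2.2.1, r.2.2.2, f, e) ∈ D₂} := by
  let flipFlow : (W × Dual K W) ≃ₗ[K] W × Dual K W :=
    (LinearEquiv.neg K).prodCongr (.refl K (Dual K W))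
  have hflip (p q : W × Dual K W) :
      flowEffortPairing K W (flipFlow p) (flipFlow q) = -flowEffortPairing K W p q := by
    simp [flipFlow, flowEffortPairing_apply, add_comm]
  rw [twoPortPairing, isSelfOrthogonal_congr_iff] at hD₁ hD₂ ⊢
  have hcomp := hD₁.interconnection hD₂ (flowEffortPairing_surjective K W)
    (σ := flipFlow) flipFlow.surjective hflip
  simp only [interconnection, Prod.exists] at hcomp
  exact hcomp

/-- The composition of two Dirac structures `D_A ⊆ V_A × V_A* × F × F*` and
`D_B ⊆ V_B × V_B* × F × F*` through the shared port `F × F*`, obtained by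
imposing `f_A = -f_B` and `e_A = e_B` and eliminating the shared variables,
is again a Dirac structure. -/
theorem composition_of_dirac_structures_is_dirac
    (DA : Set (VA × Module.Dual ℝ VA × F × Module.Dual ℝ F))
    (DB : Set (VB × Module.Dual ℝ VB × F × Module.Dual ℝ F))
    (hDA : DA = {p | ∀ q ∈ DA, pairingWithPort VA F p q = 0})
    (hDB : DB = {p | ∀ q ∈ DB, pairingWithPort VB F p q = 0}) :
    {r : VA × Module.Dual ℝ VA × VB × Module.Dual ℝ VB |
        ∃ (f : F) (e : Module.Dual ℝ F),
          (r.1, r.2.1, -f, e) ∈ DA ∧ (r.2.2.1, r.2.2.2, f, e) ∈ DB} =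
      {p : VA × Module.Dual ℝ VA × VB × Module.Dual ℝ VB |
        ∀ q ∈ {r : VA × Module.Dual ℝ VA × VB × Module.Dual ℝ VB |
            ∃ (f : F) (e : Module.Dual ℝ F),
              (r.1, r.2.1, -f, e) ∈ DA ∧ (r.2.2.1, r.2.2.2, f, e) ∈ DB},
          pairingAB VA VB p q = 0} := by
  simp only [pairingWithPort, pairingAB, ← twoPortPairing_apply] at hDA hDB ⊢
  exact composition_of_dirac_structures_is_dirac_general hDA hDB
end
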